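/- Define the (2n)×(2n) Hamiltonian matrix 𝐇(t) with blocks [[F(t), -G(t)Q(t)G*(t)], [-H*(t)R(t)^{-1}H(t), -F*(t)]], let Φ_𝐇(s,t) be its state-transition matrix (∂_s Φ_𝐇(s,t) = 𝐇(s)Φ_𝐇(s,t), Φ_𝐇(t,t) = I), and set Φ̄(T,t) := [[I, 0], [-ΣT, I]] · Φ_𝐇(T,t), with n×n blocks Φ̄_{11}, Φ̄_{12}, Φ̄_{21}, Φ̄_{22}. Assume Φ̄_{22}(T,t) is invertible for all t ∈ [t0,T]. Then for all t, s ∈ [t0,T]: (i) Σ(t) = -Φ̄_{22}(T,t)^{-1} Φ̄_{21}(T,t); (ii) Φ_{F,Σ}(t,T) = Φ̄_{22}(T,t)*; (iii) ∫_T^s Φ_{F,Σ}(T,τ) G(τ)Q(τ)G*(τ) Φ_{F,Σ}*(T,τ) dτ = Φ̄_{12}(T,s) Φ̄_{22}(T,s)^{-1}. -/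

import Mathlib

/-!
The columns of `Φ_𝐇(·,t)` are pairs `(x, y)` solving the Hamiltonian system `x' = F x - GQG* y`,
`y' = -H*R⁻¹H x - F* y`, and two first integrals decide everything.

* For two Hamiltonian pairs the Wronskian `x* v - y* u` is constant (`IsHamPair.wronskian`).
  Comparing the columns of `Φ_𝐇(·,t)` and `Φ_𝐇(·,T)` at the times `T` and `t` expresses the blocks of
  `Φ_𝐇(T,t)` through the blocks `[[a, b], [c, d]]` of `W(t) = Φ_𝐇(t,T)`:
  `Φ_𝐇(T,t) = [[d*, -b*], [-c*, a*]]` (`phiH_blocks`). With `X = a + b ΣT` and `Y = c + d ΣT` this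
  gives `Φ̄₂₂ = X*`, `Φ̄₂₁ = -Y*`, `Φ̄₁₂ = -b*`.
* For a Hamiltonian pair `(x, y)` the defect `V = y* - x* Σ` solves `V' = -V (F - GQG*Σ)`, so that
  `V(s) Φ_{F,Σ}(s,t)` does not depend on `s` (`IsHamPair.defect_mul_transition`).

The defect of `(X, Y)` vanishes at `T`, hence everywhere, which is (i). Together with
`X* Y = Y* X` and the invertibility of `X` it shows that `Σ` is symmetric and `Y = Σ X`. The defect
`V` of `(b, d)` is `I` at `T`, so `V(t) = Φ_{F,Σ}(T,t)` and `V(t) Φ_{F,Σ}(t,T) = I`, while `V X = I`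
is a Wronskian identity; this is (ii). Finally `(-b* V*)' = V GQG* V*`, and `V* = (X*)⁻¹`, which
is (iii).

All solutions are only absolutely continuous, so derivatives are taken almost everywhere; the
fundamental theorem of calculus for absolutely continuous functions turns the identities back into
integral form.
-/

open MeasureTheory Matrix Set Filter

noncomputable section

namespace SDEKernels

/-- Entrywise interval integral of a matrix-valued function. -/
def matInt {ι κ : Type*} (X : ℝ → Matrix ι κ ℝ) (a b : ℝ) : Matrix ι κ ℝ :=
  Matrix.of fun i j => ∫ τ in a..b, X τ i j

/-- Entrywise continuity of a matrix-valued function on a set. -/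
def MatContOn {ι κ : Type*} (X : ℝ → Matrix ι κ ℝ) (s : Set ℝ) : Prop :=
  ∀ i j, ContinuousOn (fun t => X t i j) s

/-- Entrywise interval integrability (matrix-valued `L¹` on `[a,b]`). -/
def MatII {ι κ : Type*} (X : ℝ → Matrix ι κ ℝ) (a b : ℝ) : Prop :=
  ∀ i j, IntervalIntegrable (fun t => X t i j) volume a b

/-- Entrywise square integrability (matrix-valued `L²` on `[a,b]`). -/
def MatL2 {ι κ : Type*} (X : ℝ → Matrix ι κ ℝ) (a b : ℝ) : Prop :=
  ∀ i j, IntervalIntegrable (fun t => X t i j) volume a b ∧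
    IntervalIntegrable (fun t => (X t i j) ^ 2) volume a b

/-- Componentwise square integrability (vector-valued `L²` on `[a,b]`). -/
def VecL2 {ι : Type*} (x : ℝ → ι → ℝ) (a b : ℝ) : Prop :=
  ∀ i, IntervalIntegrable (fun t => x t i) volume a b ∧
    IntervalIntegrable (fun t => (x t i) ^ 2) volume a b

/-- `G(τ) Q(τ) G(τ)*`. -/
def gqg {n d : ℕ} (G : ℝ → Matrix (Fin n) (Fin d) ℝ) (Q : ℝ → Matrix (Fin d) (Fin d) ℝ)
    (τ : ℝ) : Matrix (Fin n) (Fin n) ℝ := G τ * Q τ * (G τ)ᵀ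

/-- `H(τ)* R(τ)⁻¹ H(τ)`. -/
def hrh {n m : ℕ} (H : ℝ → Matrix (Fin m) (Fin n) ℝ) (R : ℝ → Matrix (Fin m) (Fin m) ℝ)
    (τ : ℝ) : Matrix (Fin n) (Fin n) ℝ := (H τ)ᵀ * (R τ)⁻¹ * H τ

/-- `Φ` is the state-transition matrix of `x' = A(s) x` on `[a,b]`, in the
Carathéodory (integral) sense: `Φ(t,t) = I` and `∂ₛ Φ(s,t) = A(s) Φ(s,t)`. -/
def IsTransition {ι : Type*} [Fintype ι] [DecidableEq ι] (a b : ℝ)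
    (A : ℝ → Matrix ι ι ℝ) (Φ : ℝ → ℝ → Matrix ι ι ℝ) : Prop :=
  ∀ t ∈ Icc a b,
    MatContOn (fun s => Φ s t) (Icc a b) ∧
    MatII (fun τ => A τ * Φ τ t) a b ∧
    ∀ s ∈ Icc a b, Φ s t = 1 + matInt (fun τ => A τ * Φ τ t) t s

/-- Carathéodory solution of the backward matrix Riccati equation
`-Σ' = ΣF + F*Σ - Σ G Q G* Σ + H* R⁻¹ H`, `Σ(b) = ST`, on `[a,b]`. -/
def SolvesBackRiccati {n m d : ℕ} (a b : ℝ) (F : ℝ → Matrix (Fin n) (Fin n) ℝ)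
    (G : ℝ → Matrix (Fin n) (Fin d) ℝ) (Q : ℝ → Matrix (Fin d) (Fin d) ℝ)
    (H : ℝ → Matrix (Fin m) (Fin n) ℝ) (R : ℝ → Matrix (Fin m) (Fin m) ℝ)
    (ST : Matrix (Fin n) (Fin n) ℝ) (S : ℝ → Matrix (Fin n) (Fin n) ℝ) : Prop :=
  MatContOn S (Icc a b) ∧
  MatII (fun τ => S τ * F τ + (F τ)ᵀ * S τ - S τ * gqg G Q τ * S τ + hrh H R τ) a b ∧
  S b = ST ∧
  ∀ t ∈ Icc a b,
    S t = ST + matInt (fun τ => S τ * F τ + (F τ)ᵀ * S τ - S τ * gqg G Q τ * S τ + hrh H R τ) t b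

/-- Carathéodory solution of the forward matrix Riccati equation
`Π' = FΠ + ΠF* - Π H* R⁻¹ H Π + G Q G*`, `Π(a) = P0`, on `[a,b]`. -/
def SolvesFwdRiccati {n m d : ℕ} (a b : ℝ) (F : ℝ → Matrix (Fin n) (Fin n) ℝ)
    (G : ℝ → Matrix (Fin n) (Fin d) ℝ) (Q : ℝ → Matrix (Fin d) (Fin d) ℝ)
    (H : ℝ → Matrix (Fin m) (Fin n) ℝ) (R : ℝ → Matrix (Fin m) (Fin m) ℝ)
    (P0 : Matrix (Fin n) (Fin n) ℝ) (P : ℝ → Matrix (Fin n) (Fin n) ℝ) : Prop :=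
  MatContOn P (Icc a b) ∧
  MatII (fun τ => F τ * P τ + P τ * (F τ)ᵀ - P τ * hrh H R τ * P τ + gqg G Q τ) a b ∧
  P a = P0 ∧
  ∀ t ∈ Icc a b,
    P t = P0 + matInt (fun τ => F τ * P τ + P τ * (F τ)ᵀ - P τ * hrh H R τ * P τ + gqg G Q τ) a t

/-- Carathéodory solution of the perturbed two-point boundary value problem
`μ' = Fμ - GQG*ν + lμ`, `-ν' = F*ν + H*R⁻¹Hμ - lν`, `μ(a) = -P0 ν(a)`, `ν(b) = ST μ(b)`. -/
def SolvesTPBVP {n m d : ℕ} (a b : ℝ) (F : ℝ → Matrix (Fin n) (Fin n) ℝ)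
    (G : ℝ → Matrix (Fin n) (Fin d) ℝ) (Q : ℝ → Matrix (Fin d) (Fin d) ℝ)
    (H : ℝ → Matrix (Fin m) (Fin n) ℝ) (R : ℝ → Matrix (Fin m) (Fin m) ℝ)
    (P0 ST : Matrix (Fin n) (Fin n) ℝ) (lμ lν : ℝ → Fin n → ℝ)
    (μ ν : ℝ → Fin n → ℝ) : Prop :=
  ContinuousOn μ (Icc a b) ∧ ContinuousOn ν (Icc a b) ∧
  IntervalIntegrable (fun τ => (F τ).mulVec (μ τ) - (gqg G Q τ).mulVec (ν τ) + lμ τ) volume a b ∧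
  IntervalIntegrable (fun τ => (F τ)ᵀ.mulVec (ν τ) + (hrh H R τ).mulVec (μ τ) - lν τ) volume a b ∧
  (∀ t ∈ Icc a b,
    μ t = μ a + ∫ τ in a..t, ((F τ).mulVec (μ τ) - (gqg G Q τ).mulVec (ν τ) + lμ τ)) ∧
  (∀ t ∈ Icc a b,
    ν t = ν b + ∫ τ in t..b, ((F τ)ᵀ.mulVec (ν τ) + (hrh H R τ).mulVec (μ τ) - lν τ)) ∧
  μ a = -(P0.mulVec (ν a)) ∧
  ν b = ST.mulVec (μ b)

/-- The trajectory kernel `K(s,t|T)`. -/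
def Kker {n d : ℕ} (t0 : ℝ) (G : ℝ → Matrix (Fin n) (Fin d) ℝ)
    (Q : ℝ → Matrix (Fin d) (Fin d) ℝ) (PhiFS : ℝ → ℝ → Matrix (Fin n) (Fin n) ℝ)
    (S : ℝ → Matrix (Fin n) (Fin n) ℝ) (P0h : Matrix (Fin n) (Fin n) ℝ)
    (s t : ℝ) : Matrix (Fin n) (Fin n) ℝ :=
  PhiFS s t0 * P0h * (1 + P0h * S t0 * P0h)⁻¹ * P0h * (PhiFS t t0)ᵀ +
    matInt (fun τ => PhiFS s τ * gqg G Q τ * (PhiFS t τ)ᵀ) t0 (min s t)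

/-- The information kernel `Λ(s,t|T)`. -/
def Lker {n m : ℕ} (T : ℝ) (H : ℝ → Matrix (Fin m) (Fin n) ℝ)
    (R : ℝ → Matrix (Fin m) (Fin m) ℝ) (PhiFP : ℝ → ℝ → Matrix (Fin n) (Fin n) ℝ)
    (P : ℝ → Matrix (Fin n) (Fin n) ℝ) (STh : Matrix (Fin n) (Fin n) ℝ)
    (s t : ℝ) : Matrix (Fin n) (Fin n) ℝ :=
  (PhiFP T s)ᵀ * STh * (1 + STh * P T * STh)⁻¹ * STh * PhiFP T t +
    matInt (fun τ => (PhiFP τ s)ᵀ * hrh H R τ * PhiFP τ t) (max s t) T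


/-- Carathéodory solution of the forward linear ODE `x' = A(τ) x` (vector-valued). -/
def SolvesLinFwd {n : ℕ} (a b : ℝ) (A : ℝ → Matrix (Fin n) (Fin n) ℝ)
    (x : ℝ → Fin n → ℝ) : Prop :=
  ContinuousOn x (Icc a b) ∧
  IntervalIntegrable (fun τ => (A τ).mulVec (x τ)) volume a b ∧
  ∀ t ∈ Icc a b, x t = x a + ∫ τ in a..t, (A τ).mulVec (x τ)

/-- Carathéodory solution of the backward linear ODE `-χ' = F(σ)* χ` on `[a,c]`
with terminal value `χ(c) = z`. -/
def SolvesChi {n : ℕ} (a c : ℝ) (F : ℝ → Matrix (Fin n) (Fin n) ℝ) (z : Fin n → ℝ)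
    (χ : ℝ → Fin n → ℝ) : Prop :=
  ContinuousOn χ (Icc a c) ∧
  IntervalIntegrable (fun σ => (F σ)ᵀ.mulVec (χ σ)) volume a c ∧
  χ c = z ∧
  ∀ τ ∈ Icc a c, χ τ = z + ∫ σ in τ..c, (F σ)ᵀ.mulVec (χ σ)

/-- Carathéodory solution of the impulse-response two-point boundary value problem at `t`:
`x' = Fx - GQG*q + GQG*χ·1_{τ<t}`, `-q' = F*q + H*R⁻¹Hx`,
`x(a) = -P0 q(a) + P0 χ(a)`, `q(b) = ST x(b)`. -/
def SolvesImpulseSystem {n m d : ℕ} (a b t : ℝ) (F : ℝ → Matrix (Fin n) (Fin n) ℝ)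
    (G : ℝ → Matrix (Fin n) (Fin d) ℝ) (Q : ℝ → Matrix (Fin d) (Fin d) ℝ)
    (H : ℝ → Matrix (Fin m) (Fin n) ℝ) (R : ℝ → Matrix (Fin m) (Fin m) ℝ)
    (P0 ST : Matrix (Fin n) (Fin n) ℝ) (χ x q : ℝ → Fin n → ℝ) : Prop :=
  ContinuousOn x (Icc a b) ∧ ContinuousOn q (Icc a b) ∧
  IntervalIntegrable (fun τ => (F τ).mulVec (x τ) - (gqg G Q τ).mulVec (q τ) +
    (if τ < t then (gqg G Q τ).mulVec (χ τ) else 0)) volume a b ∧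
  IntervalIntegrable (fun τ => (F τ)ᵀ.mulVec (q τ) + (hrh H R τ).mulVec (x τ)) volume a b ∧
  (∀ s ∈ Icc a b, x s = x a + ∫ τ in a..s, ((F τ).mulVec (x τ) - (gqg G Q τ).mulVec (q τ) +
    (if τ < t then (gqg G Q τ).mulVec (χ τ) else 0))) ∧
  (∀ s ∈ Icc a b, q s = q b + ∫ τ in s..b, ((F τ)ᵀ.mulVec (q τ) + (hrh H R τ).mulVec (x τ))) ∧
  x a = -(P0.mulVec (q a)) + P0.mulVec (χ a) ∧
  q b = ST.mulVec (x b)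

/-- Right-hand side of the adjoint equation `-λ' = F*λ + H*R⁻¹H γ`. -/
def hamRHS {n m : ℕ} (F : ℝ → Matrix (Fin n) (Fin n) ℝ)
    (H : ℝ → Matrix (Fin m) (Fin n) ℝ) (R : ℝ → Matrix (Fin m) (Fin m) ℝ)
    (gam lam : ℝ → Fin n → ℝ) (τ : ℝ) : Fin n → ℝ :=
  (F τ)ᵀ.mulVec (lam τ) + (hrh H R τ).mulVec (gam τ)

/-- Carathéodory solution `(γ, λ)` of the Hamiltonian system with a jump of size `lamb` at `s`
(and terminal condition appropriate to `ΣT = 0`):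
`γ' = Fγ - GQG*λ`, `-λ' = F*λ + H*R⁻¹Hγ` on `[t0,s)` and `(s,T]`, `γ(t0) = -Π0 λ(t0)`,
`λ(T) = 0` if `s < T` (`λ(T) = lamb` if `s = T`), and `λ(s) - λ(s⁺) = lamb` if `s < T`. -/
def SolvesHamJump {n m d : ℕ} (t0 T s : ℝ) (F : ℝ → Matrix (Fin n) (Fin n) ℝ)
    (G : ℝ → Matrix (Fin n) (Fin d) ℝ) (Q : ℝ → Matrix (Fin d) (Fin d) ℝ)
    (H : ℝ → Matrix (Fin m) (Fin n) ℝ) (R : ℝ → Matrix (Fin m) (Fin m) ℝ)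
    (P0 : Matrix (Fin n) (Fin n) ℝ) (lamb : Fin n → ℝ) (gam lam : ℝ → Fin n → ℝ) : Prop :=
  ContinuousOn gam (Icc t0 T) ∧
  IntervalIntegrable (fun τ => (F τ).mulVec (gam τ) - (gqg G Q τ).mulVec (lam τ)) volume t0 T ∧
  IntervalIntegrable (hamRHS F H R gam lam) volume t0 T ∧
  gam t0 = -(P0.mulVec (lam t0)) ∧
  (∀ t ∈ Icc t0 T,
    gam t = gam t0 + ∫ τ in t0..t, ((F τ).mulVec (gam τ) - (gqg G Q τ).mulVec (lam τ))) ∧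
  ContinuousOn lam (Icc t0 s) ∧
  (∀ t ∈ Icc t0 s, lam t = lam s + ∫ τ in t..s, hamRHS F H R gam lam τ) ∧
  (s < T →
    ContinuousOn lam (Ioc s T) ∧ lam T = 0 ∧
    (∀ t ∈ Ioc s T, lam t = ∫ τ in t..T, hamRHS F H R gam lam τ) ∧
    Tendsto lam (nhdsWithin s (Ioi s)) (nhds (lam s - lamb))) ∧
  (s = T → lam T = lamb)

/-- Carathéodory solution of the filter equation
`r' = (F - Π H* R⁻¹ H) r + Π H* R⁻¹ g`, `r(t0) = 0`. -/
def SolvesRODE {n m : ℕ} (a b : ℝ) (F : ℝ → Matrix (Fin n) (Fin n) ℝ)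
    (H : ℝ → Matrix (Fin m) (Fin n) ℝ) (R : ℝ → Matrix (Fin m) (Fin m) ℝ)
    (P : ℝ → Matrix (Fin n) (Fin n) ℝ) (g : ℝ → Fin m → ℝ) (rr : ℝ → Fin n → ℝ) : Prop :=
  ContinuousOn rr (Icc a b) ∧
  IntervalIntegrable (fun τ => (F τ - P τ * hrh H R τ).mulVec (rr τ) +
    (P τ * (H τ)ᵀ * (R τ)⁻¹).mulVec (g τ)) volume a b ∧
  rr a = 0 ∧
  ∀ t ∈ Icc a b, rr t = ∫ τ in a..t, ((F τ - P τ * hrh H R τ).mulVec (rr τ) +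
    (P τ * (H τ)ᵀ * (R τ)⁻¹).mulVec (g τ))

/-- Carathéodory solution of the controlled ODE `x' = F x + G Q^{1/2} u`, `x(t0) = Π0^{1/2} ξ`. -/
def SolvesControlODE {n d : ℕ} (a b : ℝ) (F : ℝ → Matrix (Fin n) (Fin n) ℝ)
    (G : ℝ → Matrix (Fin n) (Fin d) ℝ) (Qh : ℝ → Matrix (Fin d) (Fin d) ℝ)
    (P0h : Matrix (Fin n) (Fin n) ℝ) (ξ : Fin n → ℝ) (u : ℝ → Fin d → ℝ)
    (x : ℝ → Fin n → ℝ) : Prop :=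
  ContinuousOn x (Icc a b) ∧
  IntervalIntegrable (fun σ => (F σ).mulVec (x σ) + (G σ * Qh σ).mulVec (u σ)) volume a b ∧
  x a = P0h.mulVec ξ ∧
  ∀ τ ∈ Icc a b, x τ = x a + ∫ σ in a..τ, ((F σ).mulVec (x σ) + (G σ * Qh σ).mulVec (u σ))

/-- The least-squares objective of the deterministic smoothing problem. -/
def Jfun {n m d : ℕ} (a b : ℝ) (H : ℝ → Matrix (Fin m) (Fin n) ℝ)
    (R : ℝ → Matrix (Fin m) (Fin m) ℝ) (ST : Matrix (Fin n) (Fin n) ℝ)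
    (ytil : ℝ → Fin m → ℝ) (ξ : Fin n → ℝ) (u : ℝ → Fin d → ℝ) (x : ℝ → Fin n → ℝ) : ℝ :=
  dotProduct ξ ξ + dotProduct (ST.mulVec (x b)) (x b)
    + (∫ τ in a..b, dotProduct (u τ) (u τ))
    + (∫ τ in a..b, dotProduct ((hrh H R τ).mulVec (x τ)) (x τ))
    - 2 * ∫ τ in a..b, dotProduct (ytil τ) (((R τ)⁻¹ * H τ).mulVec (x τ))
/-- The Hamiltonian matrix `[[F, -GQG*], [-H*R⁻¹H, -F*]]`. -/
def hamMat {n m d : ℕ} (F : ℝ → Matrix (Fin n) (Fin n) ℝ)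
    (G : ℝ → Matrix (Fin n) (Fin d) ℝ) (Q : ℝ → Matrix (Fin d) (Fin d) ℝ)
    (H : ℝ → Matrix (Fin m) (Fin n) ℝ) (R : ℝ → Matrix (Fin m) (Fin m) ℝ) (t : ℝ) :
    Matrix (Fin n ⊕ Fin n) (Fin n ⊕ Fin n) ℝ :=
  Matrix.fromBlocks (F t) (-(gqg G Q t)) (-(hrh H R t)) (-(F t)ᵀ)

/-- `Φ̄(T,t) = [[I,0],[-ΣT,I]] · Φ_𝐇(T,t)`. -/
def phiBar {n : ℕ} (ST : Matrix (Fin n) (Fin n) ℝ)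
    (PhiH : ℝ → ℝ → Matrix (Fin n ⊕ Fin n) (Fin n ⊕ Fin n) ℝ) (T t : ℝ) :
    Matrix (Fin n ⊕ Fin n) (Fin n ⊕ Fin n) ℝ :=
  Matrix.fromBlocks 1 0 (-ST) 1 * PhiH T t

/-! ### Absolutely continuous functions with prescribed a.e. derivative -/

/-- `f` is absolutely continuous on `[a,b]` with derivative `f'` almost everywhere there. -/
def ACDeriv (a b : ℝ) (f f' : ℝ → ℝ) : Prop :=
  AbsolutelyContinuousOnInterval f a b ∧ ∀ᵐ x, x ∈ uIcc a b → HasDerivAt f (f' x) x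

section ACDeriv

variable {a b : ℝ} {f f' g g' : ℝ → ℝ}

/-- Absolute continuity on `[a,b]` only depends on the values there. -/
lemma ac_congr (hf : AbsolutelyContinuousOnInterval f a b) (h : EqOn f g (uIcc a b)) :
    AbsolutelyContinuousOnInterval g a b := by
  rw [absolutelyContinuousOnInterval_iff] at hf ⊢
  intro ε hε
  obtain ⟨δ, hδ, H⟩ := hf ε hε
  refine ⟨δ, hδ, fun E hE hs => ?_⟩
  convert H E hE hs using 1
  refine Finset.sum_congr rfl fun i hi => ?_
  have := hE.1 i hi
  rw [h this.1, h this.2]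

lemma ACDeriv.of_integral (hab : a ≤ b) {c k : ℝ} (hc : c ∈ Icc a b)
    (hi : IntervalIntegrable f' volume a b)
    (h : ∀ x ∈ Icc a b, f x = k + ∫ τ in c..x, f' τ) : ACDeriv a b f f' := by
  have hc' : c ∈ uIcc a b := by rwa [uIcc_of_le hab]
  constructor
  · have h1 : AbsolutelyContinuousOnInterval (fun _ : ℝ => k) a b :=
      (LipschitzWith.const k).lipschitzOnWith.absolutelyContinuousOnInterval
    refine ac_congr (h1.add (hi.absolutelyContinuousOnInterval_intervalIntegral hc')) ?_
    intro x hx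
    rw [uIcc_of_le hab] at hx
    simp [h x hx]
  -- Off `[a,b]` nothing is known about `f`, so the endpoints are left out as a null set.
  · have h₁ : ∀ᵐ x : ℝ, x ≠ a := by simp [ae_iff, measure_singleton]
    have h₂ : ∀ᵐ x : ℝ, x ≠ b := by simp [ae_iff, measure_singleton]
    filter_upwards [hi.ae_hasDerivAt_integral, h₁, h₂] with x hx hxa hxb hxm
    have hd := (hx hxm c hc').const_add k
    refine hd.congr_of_eventuallyEq ?_
    rw [uIcc_of_le hab] at hxm
    have : Ioo a b ∈ nhds x :=
      Ioo_mem_nhds (lt_of_le_of_ne hxm.1 (Ne.symm hxa)) (lt_of_le_of_ne hxm.2 hxb)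
    filter_upwards [this] with y hy
    exact h y (Ioo_subset_Icc_self hy)

lemma ACDeriv.const (k : ℝ) : ACDeriv a b (fun _ => k) (fun _ => 0) :=
  ⟨(LipschitzWith.const k).lipschitzOnWith.absolutelyContinuousOnInterval,
    Eventually.of_forall fun x _ => hasDerivAt_const x k⟩

lemma ACDeriv.add (hf : ACDeriv a b f f') (hg : ACDeriv a b g g') :
    ACDeriv a b (fun x => f x + g x) (fun x => f' x + g' x) := by
  refine ⟨hf.1.fun_add hg.1, ?_⟩
  filter_upwards [hf.2, hg.2] with x h1 h2 hx
  exact (h1 hx).add (h2 hx)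

lemma ACDeriv.neg (hf : ACDeriv a b f f') : ACDeriv a b (fun x => - f x) (fun x => - f' x) := by
  refine ⟨hf.1.fun_neg, ?_⟩
  filter_upwards [hf.2] with x h1 hx
  exact (h1 hx).neg

lemma ACDeriv.mul (hf : ACDeriv a b f f') (hg : ACDeriv a b g g') :
    ACDeriv a b (fun x => f x * g x) (fun x => f' x * g x + f x * g' x) := by
  refine ⟨hf.1.fun_mul hg.1, ?_⟩
  filter_upwards [hf.2, hg.2] with x h1 h2 hx
  exact (h1 hx).mul (h2 hx)

lemma ACDeriv.sum {ι : Type*} (s : Finset ι) {f f' : ι → ℝ → ℝ}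
    (h : ∀ i ∈ s, ACDeriv a b (f i) (f' i)) :
    ACDeriv a b (fun x => ∑ i ∈ s, f i x) (fun x => ∑ i ∈ s, f' i x) := by
  classical
  induction s using Finset.induction_on with
  | empty => simpa using ACDeriv.const 0
  | insert i s hi ih =>
    simp only [Finset.sum_insert hi]
    exact (h i (by simp)).add (ih fun j hj => h j (by simp [hj]))

lemma ACDeriv.congr_deriv (hab : a ≤ b) (hf : ACDeriv a b f f')
    (h : ∀ x ∈ Icc a b, f' x = g' x) : ACDeriv a b f g' := by
  refine ⟨hf.1, ?_⟩
  filter_upwards [hf.2] with x h1 hx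
  rw [← h x (by rwa [uIcc_of_le hab] at hx)]
  exact h1 hx

lemma ACDeriv.integral_eq (hab : a ≤ b) (hf : ACDeriv a b f f') {s t : ℝ} (hs : s ∈ Icc a b)
    (ht : t ∈ Icc a b) : ∫ x in s..t, f' x = f t - f s := by
  have hsub : uIcc s t ⊆ uIcc a b := by
    rw [uIcc_of_le hab]; exact uIcc_subset_Icc hs ht
  rw [← (hf.1.mono hsub).integral_deriv_eq_sub]
  apply intervalIntegral.integral_congr_ae
  filter_upwards [hf.2] with x h1 hx
  exact ((h1 (hsub (uIoc_subset_uIcc hx))).deriv).symm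

end ACDeriv

/-! ### Matrix-valued version -/

/-- Entrywise `ACDeriv`: `X` is absolutely continuous on `[a,b]` with a.e. derivative `X'`. -/
def MatAC {ι κ : Type*} (a b : ℝ) (X X' : ℝ → Matrix ι κ ℝ) : Prop :=
  ∀ i j, ACDeriv a b (fun t => X t i j) (fun t => X' t i j)

section MatAC

variable {ι κ l : Type*} {a b : ℝ} {X X' : ℝ → Matrix ι κ ℝ}

lemma MatAC.of_integral (hab : a ≤ b) {c : ℝ} (hc : c ∈ Icc a b) {K : Matrix ι κ ℝ}
    (hi : MatII X' a b) (h : ∀ x ∈ Icc a b, X x = K + matInt X' c x) : MatAC a b X X' :=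
  fun i j => ACDeriv.of_integral hab hc (hi i j) (k := K i j) fun x hx => by
    rw [h x hx]; rfl

lemma MatAC.const (K : Matrix ι κ ℝ) : MatAC a b (fun _ => K) (fun _ => 0) :=
  fun i j => ACDeriv.const (K i j)

lemma MatAC.add {Y Y' : ℝ → Matrix ι κ ℝ} (hX : MatAC a b X X') (hY : MatAC a b Y Y') :
    MatAC a b (fun t => X t + Y t) (fun t => X' t + Y' t) :=
  fun i j => (hX i j).add (hY i j)

lemma MatAC.neg (hX : MatAC a b X X') : MatAC a b (fun t => -X t) (fun t => -X' t) :=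
  fun i j => (hX i j).neg

lemma MatAC.sub {Y Y' : ℝ → Matrix ι κ ℝ} (hX : MatAC a b X X') (hY : MatAC a b Y Y') :
    MatAC a b (fun t => X t - Y t) (fun t => X' t - Y' t) := by
  simpa only [sub_eq_add_neg] using hX.add hY.neg

lemma MatAC.transpose (hX : MatAC a b X X') : MatAC a b (fun t => (X t)ᵀ) (fun t => (X' t)ᵀ) :=
  fun i j => hX j i

lemma MatAC.mul [Fintype κ] {Y Y' : ℝ → Matrix κ l ℝ} (hX : MatAC a b X X')
    (hY : MatAC a b Y Y') :
    MatAC a b (fun t => X t * Y t) (fun t => X' t * Y t + X t * Y' t) := by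
  intro i j
  have := ACDeriv.sum Finset.univ fun k (_ : k ∈ Finset.univ) => (hX i k).mul (hY k j)
  simpa only [Matrix.mul_apply, Matrix.add_apply, Finset.sum_add_distrib] using this

lemma MatAC.congr_deriv (hab : a ≤ b) {Z : ℝ → Matrix ι κ ℝ} (hX : MatAC a b X X')
    (h : ∀ x ∈ Icc a b, X' x = Z x) : MatAC a b X Z :=
  fun i j => (hX i j).congr_deriv hab fun x hx => by rw [h x hx]

lemma MatAC.matInt_eq (hab : a ≤ b) (hX : MatAC a b X X') {s t : ℝ} (hs : s ∈ Icc a b)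
    (ht : t ∈ Icc a b) : matInt X' s t = X t - X s := by
  ext i j
  exact (hX i j).integral_eq hab hs ht

lemma MatAC.eq_of_deriv_zero (hab : a ≤ b) (hX : MatAC a b X X')
    (h : ∀ x ∈ Icc a b, X' x = 0) {s t : ℝ} (hs : s ∈ Icc a b) (ht : t ∈ Icc a b) :
    X t = X s := by
  have h0 := (hX.congr_deriv hab h).matInt_eq hab hs ht
  rw [eq_comm, ← sub_eq_zero, ← neg_sub, ← h0]
  ext i j
  simp [matInt]

end MatAC

/-! ### Hamiltonian pairs -/

/-- `(x, y)` solves the Hamiltonian system `x' = F x - g y`, `y' = -h x - F* y` on `[a,b]`. The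
coefficients `g` and `h` stand for `GQG*` and `H*R⁻¹H`. -/
def IsHamPair {n : ℕ} (a b : ℝ) (F g h x y : ℝ → Matrix (Fin n) (Fin n) ℝ) : Prop :=
  MatAC a b x (fun t => F t * x t - g t * y t) ∧
  MatAC a b y (fun t => -(h t * x t) - (F t)ᵀ * y t)

section Ham

variable {n : ℕ} {a b : ℝ} {F g h x y u v S : ℝ → Matrix (Fin n) (Fin n) ℝ}

/-- Right linear combinations of Hamiltonian pairs. -/
lemma IsHamPair.add_mul_const (h1 : IsHamPair a b F g h x y) (h2 : IsHamPair a b F g h u v)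
    (hab : a ≤ b) (K : Matrix (Fin n) (Fin n) ℝ) :
    IsHamPair a b F g h (fun t => x t + u t * K) (fun t => y t + v t * K) := by
  constructor
  · refine (h1.1.add (h2.1.mul (MatAC.const K))).congr_deriv hab fun t _ => ?_
    noncomm_ring
  · refine (h1.2.add (h2.2.mul (MatAC.const K))).congr_deriv hab fun t _ => ?_
    noncomm_ring

/-- The Wronskian of two Hamiltonian pairs is constant; this is the symplecticity of the flow. -/
lemma IsHamPair.wronskian (h1 : IsHamPair a b F g h x y) (h2 : IsHamPair a b F g h u v)
    (hab : a ≤ b) (hg : ∀ t ∈ Icc a b, (g t)ᵀ = g t) (hh : ∀ t ∈ Icc a b, (h t)ᵀ = h t)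
    {s t : ℝ} (hs : s ∈ Icc a b) (ht : t ∈ Icc a b) :
    (x t)ᵀ * v t - (y t)ᵀ * u t = (x s)ᵀ * v s - (y s)ᵀ * u s := by
  refine ((h1.1.transpose.mul h2.2).sub (h1.2.transpose.mul h2.1)).eq_of_deriv_zero hab
    (fun τ hτ => ?_) hs ht
  simp only [transpose_sub, transpose_neg, transpose_mul, transpose_transpose, hg τ hτ, hh τ hτ]
  noncomm_ring

/-- If `S` solves the Riccati equation, the defect `y* - x* S` of a Hamiltonian pair solves the
adjoint closed-loop equation `V' = -V (F - g S)`. -/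
lemma IsHamPair.defect (h1 : IsHamPair a b F g h x y) (hab : a ≤ b)
    (hg : ∀ t ∈ Icc a b, (g t)ᵀ = g t) (hh : ∀ t ∈ Icc a b, (h t)ᵀ = h t)
    (hS : MatAC a b S (fun τ => -(S τ * F τ + (F τ)ᵀ * S τ - S τ * g τ * S τ + h τ))) :
    MatAC a b (fun t => (y t)ᵀ - (x t)ᵀ * S t)
      (fun t => -(((y t)ᵀ - (x t)ᵀ * S t) * (F t - g t * S t))) := by
  refine (h1.2.transpose.sub (h1.1.transpose.mul hS)).congr_deriv hab fun τ hτ => ?_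
  simp only [transpose_sub, transpose_neg, transpose_mul, transpose_transpose, hg τ hτ, hh τ hτ]
  noncomm_ring

lemma IsTransition.matAC {ι : Type*} [Fintype ι] [DecidableEq ι] {A : ℝ → Matrix ι ι ℝ}
    {P : ℝ → ℝ → Matrix ι ι ℝ} (hP : IsTransition a b A P) (hab : a ≤ b) {t : ℝ}
    (ht : t ∈ Icc a b) : MatAC a b (fun s => P s t) (fun s => A s * P s t) :=
  MatAC.of_integral hab ht (hP t ht).2.1 (hP t ht).2.2

lemma IsTransition.self {ι : Type*} [Fintype ι] [DecidableEq ι] {A : ℝ → Matrix ι ι ℝ}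
    {P : ℝ → ℝ → Matrix ι ι ℝ} (hP : IsTransition a b A P) {t : ℝ}
    (ht : t ∈ Icc a b) : P t t = 1 := by
  rw [(hP t ht).2.2 t ht]
  ext i j
  simp [matInt]

/-- The defect of a Hamiltonian pair is propagated from the right by the closed-loop transition
matrix. -/
lemma IsHamPair.defect_mul_transition (h1 : IsHamPair a b F g h x y) (hab : a ≤ b)
    (hg : ∀ t ∈ Icc a b, (g t)ᵀ = g t) (hh : ∀ t ∈ Icc a b, (h t)ᵀ = h t)
    (hS : MatAC a b S (fun τ => -(S τ * F τ + (F τ)ᵀ * S τ - S τ * g τ * S τ + h τ)))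
    {P : ℝ → ℝ → Matrix (Fin n) (Fin n) ℝ}
    (hP : IsTransition a b (fun τ => F τ - g τ * S τ) P) {s t : ℝ} (hs : s ∈ Icc a b)
    (ht : t ∈ Icc a b) :
    ((y s)ᵀ - (x s)ᵀ * S s) * P s t = (y t)ᵀ - (x t)ᵀ * S t := by
  have := ((h1.defect hab hg hh hS).mul (hP.matAC hab ht)).eq_of_deriv_zero hab
    (fun τ _ => by noncomm_ring) ht hs
  rw [this, hP.self ht, mul_one]

/-- The two block columns of the Hamiltonian transition matrix are Hamiltonian pairs. -/
lemma isHamPair_blocks {P : ℝ → ℝ → Matrix (Fin n ⊕ Fin n) (Fin n ⊕ Fin n) ℝ}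
    (hP : IsTransition a b (fun t => fromBlocks (F t) (-(g t)) (-(h t)) (-(F t)ᵀ)) P)
    (hab : a ≤ b) {t : ℝ} (ht : t ∈ Icc a b) :
    IsHamPair a b F g h (fun s => (P s t).toBlocks₁₁) (fun s => (P s t).toBlocks₂₁) ∧
    IsHamPair a b F g h (fun s => (P s t).toBlocks₁₂) (fun s => (P s t).toBlocks₂₂) := by
  have hM := hP.matAC hab ht
  have key : ∀ s, fromBlocks (F s) (-(g s)) (-(h s)) (-(F s)ᵀ) * P s t =
      fromBlocks (F s * (P s t).toBlocks₁₁ - g s * (P s t).toBlocks₂₁)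
        (F s * (P s t).toBlocks₁₂ - g s * (P s t).toBlocks₂₂)
        (-(h s * (P s t).toBlocks₁₁) - (F s)ᵀ * (P s t).toBlocks₂₁)
        (-(h s * (P s t).toBlocks₁₂) - (F s)ᵀ * (P s t).toBlocks₂₂) := by
    intro s
    conv_lhs => rw [← fromBlocks_toBlocks (P s t)]
    rw [fromBlocks_multiply]
    simp only [Matrix.neg_mul, sub_eq_add_neg]
  simp only [key] at hM
  exact ⟨⟨fun i j => hM (Sum.inl i) (Sum.inl j), fun i j => hM (Sum.inr i) (Sum.inl j)⟩,
    ⟨fun i j => hM (Sum.inl i) (Sum.inr j), fun i j => hM (Sum.inr i) (Sum.inr j)⟩⟩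

/-- Symplectic inversion: the blocks of `P(T,t)` are, up to sign, the transposed blocks of
`P(t,T)`. -/
lemma phiH_blocks {P : ℝ → ℝ → Matrix (Fin n ⊕ Fin n) (Fin n ⊕ Fin n) ℝ}
    (hP : IsTransition a b (fun t => fromBlocks (F t) (-(g t)) (-(h t)) (-(F t)ᵀ)) P)
    (hab : a ≤ b) (hg : ∀ t ∈ Icc a b, (g t)ᵀ = g t) (hh : ∀ t ∈ Icc a b, (h t)ᵀ = h t)
    {s t : ℝ} (hs : s ∈ Icc a b) (ht : t ∈ Icc a b) :
    P s t = fromBlocks ((P t s).toBlocks₂₂)ᵀ (-((P t s).toBlocks₁₂)ᵀ)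
      (-((P t s).toBlocks₂₁)ᵀ) ((P t s).toBlocks₁₁)ᵀ := by
  obtain ⟨p1, p2⟩ := isHamPair_blocks hP hab ht
  obtain ⟨q1, q2⟩ := isHamPair_blocks hP hab hs
  have e11 := p1.wronskian q1 hab hg hh hs ht
  have e12 := p1.wronskian q2 hab hg hh hs ht
  have e21 := p2.wronskian q1 hab hg hh hs ht
  have e22 := p2.wronskian q2 hab hg hh hs ht
  have z11 : (1 : Matrix (Fin n ⊕ Fin n) (Fin n ⊕ Fin n) ℝ).toBlocks₁₁ = 1 := by
    rw [← fromBlocks_one, toBlocks_fromBlocks₁₁]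
  have z12 : (1 : Matrix (Fin n ⊕ Fin n) (Fin n ⊕ Fin n) ℝ).toBlocks₁₂ = 0 := by
    rw [← fromBlocks_one, toBlocks_fromBlocks₁₂]
  have z21 : (1 : Matrix (Fin n ⊕ Fin n) (Fin n ⊕ Fin n) ℝ).toBlocks₂₁ = 0 := by
    rw [← fromBlocks_one, toBlocks_fromBlocks₂₁]
  have z22 : (1 : Matrix (Fin n ⊕ Fin n) (Fin n ⊕ Fin n) ℝ).toBlocks₂₂ = 1 := by
    rw [← fromBlocks_one, toBlocks_fromBlocks₂₂]
  simp only [hP.self hs, hP.self ht, z11, z12, z21, z22, transpose_one, transpose_zero, mul_one,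
    one_mul, mul_zero, zero_mul, sub_zero, zero_sub] at e11 e12 e21 e22
  rw [e11, e12, neg_inj.1 e21, neg_eq_iff_eq_neg.1 e22]
  conv_lhs => rw [← fromBlocks_toBlocks (P s t)]
  simp

end Ham

/-! ### Block formulas for the Hamiltonian transition matrix -/

lemma gqg_transpose {n d : ℕ} {G : ℝ → Matrix (Fin n) (Fin d) ℝ}
    {Q : ℝ → Matrix (Fin d) (Fin d) ℝ} {t : ℝ} (hQ : (Q t)ᵀ = Q t) :
    (gqg G Q t)ᵀ = gqg G Q t := by
  simp [gqg, transpose_mul, hQ, Matrix.mul_assoc]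

lemma hrh_transpose {n m : ℕ} {H : ℝ → Matrix (Fin m) (Fin n) ℝ}
    {R : ℝ → Matrix (Fin m) (Fin m) ℝ} {t : ℝ} (hR : (R t)ᵀ = R t) :
    (hrh H R t)ᵀ = hrh H R t := by
  simp [hrh, transpose_mul, transpose_nonsing_inv, hR, Matrix.mul_assoc]

lemma SolvesBackRiccati.matAC {n m d : ℕ} {a b : ℝ} {F : ℝ → Matrix (Fin n) (Fin n) ℝ}
    {G : ℝ → Matrix (Fin n) (Fin d) ℝ} {Q : ℝ → Matrix (Fin d) (Fin d) ℝ}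
    {H : ℝ → Matrix (Fin m) (Fin n) ℝ} {R : ℝ → Matrix (Fin m) (Fin m) ℝ}
    {ST : Matrix (Fin n) (Fin n) ℝ} {S : ℝ → Matrix (Fin n) (Fin n) ℝ}
    (hS : SolvesBackRiccati a b F G Q H R ST S) (hab : a ≤ b) :
    MatAC a b S (fun τ => -(S τ * F τ + (F τ)ᵀ * S τ - S τ * gqg G Q τ * S τ + hrh H R τ)) := by
  obtain ⟨-, hi, -, hS⟩ := hS
  refine MatAC.of_integral hab (right_mem_Icc.2 hab) (K := ST) (fun i j => (hi i j).neg) ?_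
  intro t ht
  rw [hS t ht]
  congr 1
  ext i j
  simp only [matInt, of_apply, Matrix.neg_apply, intervalIntegral.integral_neg]
  exact intervalIntegral.integral_symm _ _

/-- Computation of `Σ`, `Φ_{F,Σ}` and the Gramian-type integral through the blocks of the
transition matrix of the Hamiltonian matrix. -/
theorem stmt17 {n m d : ℕ} (t0 T r : ℝ) (ht : t0 < T) (hr : 0 < r)
    (F : ℝ → Matrix (Fin n) (Fin n) ℝ) (G : ℝ → Matrix (Fin n) (Fin d) ℝ)
    (Q : ℝ → Matrix (Fin d) (Fin d) ℝ) (H : ℝ → Matrix (Fin m) (Fin n) ℝ)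
    (R : ℝ → Matrix (Fin m) (Fin m) ℝ)
    (hF : MatII F t0 T) (hG : MatL2 G t0 T) (hQ : MatII Q t0 T)
    (hQpsd : ∀ t ∈ Icc t0 T, (Q t).PosSemidef) (hH : MatL2 H t0 T) (hR : MatL2 R t0 T)
    (hRbd : ∀ t ∈ Icc t0 T, (R t - r • (1 : Matrix (Fin m) (Fin m) ℝ)).PosSemidef)
    (ST : Matrix (Fin n) (Fin n) ℝ) (hST : ST.PosSemidef)
    (Sg : ℝ → Matrix (Fin n) (Fin n) ℝ) (hSg : SolvesBackRiccati t0 T F G Q H R ST Sg)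
    (PhiFS : ℝ → ℝ → Matrix (Fin n) (Fin n) ℝ)
    (hPhiFS : IsTransition t0 T (fun τ => F τ - gqg G Q τ * Sg τ) PhiFS)
    (PhiH : ℝ → ℝ → Matrix (Fin n ⊕ Fin n) (Fin n ⊕ Fin n) ℝ)
    (hPhiH : IsTransition t0 T (hamMat F G Q H R) PhiH)
    (hinv : ∀ t ∈ Icc t0 T, IsUnit ((phiBar ST PhiH T t).toBlocks₂₂).det) :
    (∀ t ∈ Icc t0 T,
      Sg t = -(((phiBar ST PhiH T t).toBlocks₂₂)⁻¹ * (phiBar ST PhiH T t).toBlocks₂₁) ∧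
      PhiFS t T = ((phiBar ST PhiH T t).toBlocks₂₂)ᵀ) ∧
    ∀ s ∈ Icc t0 T,
      matInt (fun τ => PhiFS T τ * gqg G Q τ * (PhiFS T τ)ᵀ) T s =
        (phiBar ST PhiH T s).toBlocks₁₂ * ((phiBar ST PhiH T s).toBlocks₂₂)⁻¹ := by
  have hab := ht.le
  have hT : T ∈ Icc t0 T := right_mem_Icc.2 hab
  have hg : ∀ t ∈ Icc t0 T, (gqg G Q t)ᵀ = gqg G Q t := fun t h =>
    gqg_transpose (by simpa using (hQpsd t h).isHermitian.eq)
  have hh : ∀ t ∈ Icc t0 T, (hrh H R t)ᵀ = hrh H R t := fun t h => by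
    refine hrh_transpose ?_
    have := (hRbd t h).isHermitian.eq
    simpa using this
  have hSTt : STᵀ = ST := by simpa using hST.isHermitian.eq
  have hS := hSg.matAC hab
  have hST' : Sg T = ST := hSg.2.2.1
  obtain ⟨q1, q2⟩ := isHamPair_blocks hPhiH hab hT
  have w1 := q1.add_mul_const q2 hab ST
  have hPT := hPhiH.self hT
  have hPbar : ∀ t ∈ Icc t0 T, phiBar ST PhiH T t =
      fromBlocks ((PhiH t T).toBlocks₂₂)ᵀ (-((PhiH t T).toBlocks₁₂)ᵀ)
        (-((PhiH t T).toBlocks₂₁ + (PhiH t T).toBlocks₂₂ * ST)ᵀ)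
        (((PhiH t T).toBlocks₁₁ + (PhiH t T).toBlocks₁₂ * ST)ᵀ) := by
    intro t h
    rw [phiBar, phiH_blocks hPhiH hab hg hh hT h, fromBlocks_multiply]
    simp only [transpose_add, transpose_mul, hSTt]
    congr 1 <;> simp
    all_goals abel
  generalize hA : (fun t => (PhiH t T).toBlocks₁₁) = A at q1 q2 w1
  generalize hB : (fun t => (PhiH t T).toBlocks₁₂) = B at q1 q2 w1
  generalize hC : (fun t => (PhiH t T).toBlocks₂₁) = C at q1 q2 w1
  generalize hD : (fun t => (PhiH t T).toBlocks₂₂) = D at q1 q2 w1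
  have hA' : ∀ t, (PhiH t T).toBlocks₁₁ = A t := fun t => congrFun hA t
  have hB' : ∀ t, (PhiH t T).toBlocks₁₂ = B t := fun t => congrFun hB t
  have hC' : ∀ t, (PhiH t T).toBlocks₂₁ = C t := fun t => congrFun hC t
  have hD' : ∀ t, (PhiH t T).toBlocks₂₂ = D t := fun t => congrFun hD t
  have hAT : A T = 1 := by rw [← hA', hPT, ← fromBlocks_one, toBlocks_fromBlocks₁₁]
  have hBT : B T = 0 := by rw [← hB', hPT, ← fromBlocks_one, toBlocks_fromBlocks₁₂]
  have hCT : C T = 0 := by rw [← hC', hPT, ← fromBlocks_one, toBlocks_fromBlocks₂₁]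
  have hDT : D T = 1 := by rw [← hD', hPT, ← fromBlocks_one, toBlocks_fromBlocks₂₂]
  simp only [hA', hB', hC', hD'] at hPbar w1
  have hXu : ∀ t ∈ Icc t0 T, IsUnit ((A t + B t * ST)ᵀ).det := fun t h => by
    have := hinv t h
    rwa [hPbar t h, toBlocks_fromBlocks₂₂] at this
  -- The defect of `(X, Y)` vanishes at `T`, hence everywhere: `Y* = X* Σ`.
  have hYX : ∀ t ∈ Icc t0 T, (C t + D t * ST)ᵀ = (A t + B t * ST)ᵀ * Sg t := fun t h => by
    have := w1.defect_mul_transition hab hg hh hS hPhiFS hT h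
    simp only [hAT, hBT, hCT, hDT, hST', zero_mul, add_zero, zero_add, one_mul, transpose_one,
      hSTt, sub_self] at this
    exact (sub_eq_zero.1 this.symm)
  have hsymm : ∀ t ∈ Icc t0 T, Sg t * (A t + B t * ST) = C t + D t * ST := fun t h => by
    have := w1.wronskian w1 hab hg hh hT h
    simp only [hAT, hBT, hCT, hDT, zero_mul, add_zero, zero_add, one_mul, transpose_one,
      hSTt, mul_one, sub_self] at this
    have e := sub_eq_zero.1 this
    rw [hYX t h, Matrix.mul_assoc] at e
    have := congrArg (fun M => ((A t + B t * ST)ᵀ)⁻¹ * M) e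
    simp only [nonsing_inv_mul_cancel_left _ _ (hXu t h)] at this
    exact this.symm
  have hSsymm : ∀ t ∈ Icc t0 T, (Sg t)ᵀ = Sg t := fun t h => by
    have e := hYX t h
    rw [← hsymm t h, transpose_mul] at e
    have := congrArg (fun M => ((A t + B t * ST)ᵀ)⁻¹ * M) e
    simpa only [nonsing_inv_mul_cancel_left _ _ (hXu t h)] using this
  have hVX : ∀ t ∈ Icc t0 T, ((D t)ᵀ - (B t)ᵀ * Sg t) * (A t + B t * ST) = 1 := fun t h => by
    have := q2.wronskian w1 hab hg hh hT h
    simp only [hAT, hBT, hCT, hDT, zero_mul, add_zero, zero_add, one_mul, transpose_one,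
      transpose_zero, zero_sub] at this
    rw [sub_mul, Matrix.mul_assoc, hsymm t h, ← neg_sub, this, neg_neg]
  have hVT : ∀ t ∈ Icc t0 T, PhiFS T t = (D t)ᵀ - (B t)ᵀ * Sg t := fun t h => by
    have := q2.defect_mul_transition hab hg hh hS hPhiFS hT h
    simpa only [hBT, hDT, transpose_one, transpose_zero, zero_mul, sub_zero, one_mul] using this
  have hVP : ∀ t ∈ Icc t0 T, ((D t)ᵀ - (B t)ᵀ * Sg t) * PhiFS t T = 1 := fun t h => by
    have := q2.defect_mul_transition hab hg hh hS hPhiFS h hT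
    simpa only [hBT, hDT, transpose_one, transpose_zero, zero_mul, sub_zero] using this
  refine ⟨fun t h => ⟨?_, ?_⟩, fun s hs => ?_⟩
  · rw [hPbar t h, toBlocks_fromBlocks₂₂, toBlocks_fromBlocks₂₁, hYX t h, Matrix.mul_neg,
      nonsing_inv_mul_cancel_left _ _ (hXu t h), neg_neg]
  · rw [hPbar t h, toBlocks_fromBlocks₂₂, transpose_transpose]
    -- Both sides are right inverses of the square matrix `V(t)`.
    have hl := mul_eq_one_comm.1 (hVX t h)
    calc PhiFS t T = ((A t + B t * ST) * ((D t)ᵀ - (B t)ᵀ * Sg t)) * PhiFS t T := by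
          rw [hl, one_mul]
      _ = A t + B t * ST := by rw [Matrix.mul_assoc, hVP t h, mul_one]
  · rw [hPbar s hs, toBlocks_fromBlocks₂₂, toBlocks_fromBlocks₁₂]
    have hXi : ((A s + B s * ST)ᵀ)⁻¹ = ((D s)ᵀ - (B s)ᵀ * Sg s)ᵀ := by
      refine inv_eq_right_inv ?_
      rw [← transpose_mul, hVX s hs, transpose_one]
    have hN : MatAC t0 T (fun τ => -((B τ)ᵀ * ((D τ)ᵀ - (B τ)ᵀ * Sg τ)ᵀ))
        (fun τ => PhiFS T τ * gqg G Q τ * (PhiFS T τ)ᵀ) := by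
      refine (q2.1.transpose.mul (q2.defect hab hg hh hS).transpose).neg.congr_deriv hab
        fun τ hτ => ?_
      rw [hVT τ hτ]
      simp only [transpose_sub, transpose_neg, transpose_mul, transpose_transpose, hg τ hτ,
        hSsymm τ hτ]
      noncomm_ring
    rw [hN.matInt_eq hab hT hs, hXi, hBT]
    simp

end SDEKernels
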